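/- Let R be a right artinian ring. If the φ-dimension of R (the supremum of φ(M) over all finitely generated right R-modules M) is finite, then the finitistic dimension of R is finite; in fact fin.dim(R) ≤ φ-dim(R). -/

import Mathlib

open Module Function

universe u

variable (R : Type u) [Ring R]

/-- A finitely generated right `R`-module, encoded as a module over `Rᵐᵒᵖ`. -/
structure FGMod where
  carrier : Type u
  [isAddCommGroup : AddCommGroup carrier]
  [isModule : Module Rᵐᵒᵖ carrier]
  [isFinite : Module.Finite Rᵐᵒᵖ carrier]

attribute [instance] FGMod.isAddCommGroup FGMod.isModule FGMod.isFinite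

instance : CoeSort (FGMod R) (Type u) := ⟨FGMod.carrier⟩

variable {R}

/-- Isomorphism of f.g. right modules. -/
def FGMod.Iso (M N : FGMod R) : Prop := Nonempty (M ≃ₗ[Rᵐᵒᵖ] N)

/-- Direct sum. -/
def FGMod.prod (M N : FGMod R) : FGMod R := ⟨M × N⟩

/-- `M^k`, the direct sum of `k` copies of `M`. -/
def FGMod.pow (M : FGMod R) (k : ℕ) : FGMod R := ⟨Fin k → M⟩

/-- `N` is (isomorphic to) a direct summand of `M`. -/
def FGMod.IsSummand (N M : FGMod R) : Prop :=
  ∃ A B : Submodule Rᵐᵒᵖ M, IsCompl A B ∧ Nonempty (N ≃ₗ[Rᵐᵒᵖ] A)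

/-- `M` is indecomposable. -/
def FGMod.Indec (M : FGMod R) : Prop :=
  Nontrivial M ∧ ∀ A B : Submodule Rᵐᵒᵖ M, IsCompl A B → A = ⊥ ∨ B = ⊥

/-- `M` is projective. -/
def FGMod.Proj (M : FGMod R) : Prop := Module.Projective Rᵐᵒᵖ M

/-- `f : P → M` is a projective cover: `P` projective, `f` surjective with superfluous kernel. -/
def IsProjCover (M P : FGMod R) (f : P →ₗ[Rᵐᵒᵖ] M) : Prop :=
  P.Proj ∧ Surjective f ∧ ∀ N : Submodule Rᵐᵒᵖ P, N ⊔ LinearMap.ker f = ⊤ → N = ⊤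

/-- `N` is a (first) syzygy of `M`: the kernel of a projective cover of `M`. -/
def IsSyzygy (M N : FGMod R) : Prop :=
  ∃ (P : FGMod R) (f : P →ₗ[Rᵐᵒᵖ] M),
    IsProjCover M P f ∧ Nonempty (N ≃ₗ[Rᵐᵒᵖ] LinearMap.ker f)

/-- `N` is an `n`-th syzygy of `M`. -/
def IsSyzygyN : ℕ → FGMod R → FGMod R → Prop
  | 0, M, N => M.Iso N
  | n+1, M, N => ∃ L, IsSyzygy M L ∧ IsSyzygyN n L N

/-- `M` has projective dimension at most `n`. -/
def HasPdLE : ℕ → FGMod R → Prop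
  | 0, M => M.Proj
  | n+1, M => M.Proj ∨ ∃ N, IsSyzygy M N ∧ HasPdLE n N

/-- `M` has finite projective dimension. -/
def FinPd (M : FGMod R) : Prop := ∃ n, HasPdLE n M

/-- The projective dimension of `M` (junk value if infinite). -/
noncomputable def pdIT (M : FGMod R) : ℕ := sInf {n | HasPdLE n M}

variable (R)

/-- The Igusa–Todorov relations in the free abelian group on f.g. right modules:
`[A] - [B] - [C]` whenever `A ≅ B ⊕ C`, and `[P]` for `P` projective. -/
def ITRel : Set (FreeAbelianGroup (FGMod R)) :=
  {x | ∃ A B C : FGMod R, Nonempty (A ≃ₗ[Rᵐᵒᵖ] (B × C : Type u)) ∧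
        x = FreeAbelianGroup.of A - FreeAbelianGroup.of B - FreeAbelianGroup.of C} ∪
  {x | ∃ P : FGMod R, P.Proj ∧ x = FreeAbelianGroup.of P}

/-- The Igusa–Todorov group `K`. -/
def ITK := FreeAbelianGroup (FGMod R) ⧸ AddSubgroup.closure (ITRel R)

noncomputable instance : AddCommGroup (ITK R) :=
  QuotientAddGroup.Quotient.addCommGroup _

/-- The class `[M]` in `K`. -/
noncomputable def ITcls (M : FGMod R) : ITK R := QuotientAddGroup.mk (FreeAbelianGroup.of M)

/-- `⟨M⟩`: the subgroup of `K` generated by the indecomposable non-projective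
direct summands of `M`. -/
noncomputable def ITgen (M : FGMod R) : AddSubgroup (ITK R) :=
  AddSubgroup.closure
    {x | ∃ N : FGMod R, N.IsSummand M ∧ N.Indec ∧ ¬N.Proj ∧ x = ITcls R N}

/-- The rank of a subgroup of `K`. -/
noncomputable def rkIT (H : AddSubgroup (ITK R)) : ℕ :=
  Module.finrank ℤ (AddSubgroup.toIntSubmodule H)

/-- `OmK` is a syzygy endomorphism of `K`: a group endomorphism sending `[M]` to `[ΩM]`. -/
def IsSyzygyEnd (OmK : AddMonoid.End (ITK R)) : Prop :=
  ∀ M N : FGMod R, IsSyzygy M N → OmK (ITcls R M) = ITcls R N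

/-- The Igusa–Todorov function `φ`: the least `n` such that the rank of
`Ω^i⟨M⟩` equals that of `Ω^n⟨M⟩` for all `i ≥ n`. -/
noncomputable def phiIT (OmK : AddMonoid.End (ITK R)) (M : FGMod R) : ℕ :=
  sInf {n | ∀ i, n ≤ i →
    rkIT R ((ITgen R M).map ((OmK ^ i : AddMonoid.End (ITK R)) : ITK R →+ ITK R))
      = rkIT R ((ITgen R M).map ((OmK ^ n : AddMonoid.End (ITK R)) : ITK R →+ ITK R))}

/-- The second Igusa–Todorov function `ψ`. -/
noncomputable def psiIT (OmK : AddMonoid.End (ITK R)) (M : FGMod R) : ℕ :=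
  phiIT R OmK M + sSup {d | ∃ N X : FGMod R, IsSyzygyN (phiIT R OmK M) M N ∧
      X.IsSummand N ∧ FinPd X ∧ d = pdIT X}

/-- The socle of a module: the sum of its simple submodules. -/
def socleIT (M : FGMod R) : Submodule Rᵐᵒᵖ M :=
  sSup {S : Submodule Rᵐᵒᵖ M | IsSimpleModule Rᵐᵒᵖ S}

/-! Over a right artinian ring every finitely generated module has a projective cover, and
`M ↦ length (Ω M)` is additive and vanishes exactly on the projectives. It therefore factors through
the Igusa–Todorov group `K`, so a class `[M]` has finite order in `K` only if `M` is projective. As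
`Ω ^ n [M]` is again the class of a module, `pd M ≤ n` is equivalent to `Ω ^ n [M] = 0`.

If `N` is indecomposable, `⟨N⟩` is cyclic, generated by `[N]`, so `Ω ^ n ⟨N⟩` has rank `0` exactly
when `pd N ≤ n`. If `pd N` is finite, the ranks are eventually `0`, hence already `0` at `n = φ(N)`,
that is, `pd N ≤ φ(N)`. A finitely generated module is a finite direct sum of indecomposables, and
its projective dimension is the maximum of theirs. Treating the indecomposables separately keeps
`⟨N⟩` finitely generated without appealing to the Krull–Schmidt theorem.
-/

theorem apply_sInf_stable_of_eventually_eq {α : Type*} {r : ℕ → α} {c : α}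
    (h : ∀ᶠ i in Filter.atTop, r i = c) : r (sInf {n | ∀ i, n ≤ i → r i = r n}) = c := by
  obtain ⟨n, hn⟩ := Filter.eventually_atTop.mp h
  have hstable : sInf {n | ∀ i, n ≤ i → r i = r n} ∈ {n | ∀ i, n ≤ i → r i = r n} :=
    Nat.sInf_mem ⟨n, fun i hi => (hn i hi).trans (hn n le_rfl).symm⟩
  rw [← hstable _ (le_max_left _ n), hn _ (le_max_right _ n)]

theorem finrank_int_zmultiples_eq_zero_iff {G : Type*} [AddCommGroup G] (x : G) :
    finrank ℤ (AddSubgroup.toIntSubmodule (AddSubgroup.zmultiples x)) = 0 ↔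
      IsOfFinAddOrder x := by
  rw [AddSubgroup.zmultiples_eq_closure, AddSubgroup.toIntSubmodule_closure,
    finrank_eq_zero_iff, isOfFinAddOrder_iff_zsmul_eq_zero]
  constructor
  · intro h
    obtain ⟨k, hk, hkx⟩ := h ⟨x, Submodule.mem_span_singleton_self x⟩
    exact ⟨k, hk, congrArg Subtype.val hkx⟩
  · rintro ⟨k, hk, hkx⟩ ⟨y, hy⟩
    obtain ⟨m, rfl⟩ := Submodule.mem_span_singleton.mp hy
    exact ⟨k, hk, Subtype.ext (by rw [Submodule.coe_smul, smul_comm, hkx, smul_zero]; rfl)⟩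

section Modules

variable {A M N P Q : Type*} [Ring A] [AddCommGroup M] [Module A M] [AddCommGroup N] [Module A N]
  [AddCommGroup P] [Module A P] [AddCommGroup Q] [Module A Q]

theorem projective_prod_iff :
    Module.Projective A (M × N) ↔ Module.Projective A M ∧ Module.Projective A N := by
  constructor
  · intro h
    exact ⟨.of_split (LinearMap.inl A M N) (LinearMap.fst A M N) (LinearMap.fst_comp_inl ..),
      .of_split (LinearMap.inr A M N) (LinearMap.snd A M N) (LinearMap.snd_comp_inr ..)⟩
  · rintro ⟨hM, hN⟩
    infer_instance

/-- A superfluous submodule: one whose sum with a proper submodule is proper. With this notion, the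
last clause of `IsProjCover` says that the kernel of the cover is superfluous. -/
def IsSuperfluous (K : Submodule A M) : Prop :=
  ∀ L : Submodule A M, L ⊔ K = ⊤ → L = ⊤

namespace IsSuperfluous

theorem bot : IsSuperfluous (⊥ : Submodule A M) := fun L hL => by rwa [sup_bot_eq] at hL

theorem sup {K L : Submodule A M} (hK : IsSuperfluous K) (hL : IsSuperfluous L) :
    IsSuperfluous (K ⊔ L) := fun S hS => hK S (hL _ (by rwa [sup_assoc]))

theorem map {K : Submodule A M} (hK : IsSuperfluous K) (f : M →ₗ[A] N) :
    IsSuperfluous (K.map f) := by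
  intro L hL
  have hcomap : L.comap f ⊔ K = ⊤ := by
    rw [eq_top_iff]
    intro m _
    obtain ⟨l, hl, _, ⟨k, hk, rfl⟩, hlk⟩ : ∃ l ∈ L, ∃ y ∈ K.map f, l + y = f m :=
      Submodule.mem_sup.mp (hL ▸ Submodule.mem_top)
    refine Submodule.mem_sup.mpr ⟨m - k, ?_, k, hk, sub_add_cancel m k⟩
    rwa [Submodule.mem_comap, map_sub, ← hlk, add_sub_cancel_right]
  have hmap : K.map f ≤ L := Submodule.map_le_iff_le_comap.mpr (hK _ hcomap ▸ le_top)
  rwa [sup_eq_left.mpr hmap] at hL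

theorem ker_prodMap {f : P →ₗ[A] M} {g : Q →ₗ[A] N} (hf : IsSuperfluous (LinearMap.ker f))
    (hg : IsSuperfluous (LinearMap.ker g)) : IsSuperfluous (LinearMap.ker (f.prodMap g)) := by
  rw [LinearMap.ker_prodMap, LinearMap.prod_eq_sup_map]
  exact (hf.map _).sup (hg.map _)

theorem surjective_of_comp {f : P →ₗ[A] M} (hf : IsSuperfluous (LinearMap.ker f)) {h : Q →ₗ[A] P}
    (hfh : Surjective (f ∘ₗ h)) : Surjective h := by
  have hf_range : LinearMap.range f = ⊤ := LinearMap.range_eq_top.mpr (Surjective.of_comp hfh)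
  rw [← LinearMap.range_eq_top] at hfh ⊢
  rw [LinearMap.range_comp, LinearMap.map_eq_top_iff hf_range] at hfh
  exact hf _ hfh

end IsSuperfluous

/-- Lifting `f` along its restriction to `L` gives an endomorphism of `P` with image in `L` that
commutes with `f`; the summand `S` is the eventual image of that endomorphism. -/
theorem exists_isCompl_le_map_eq_top [IsArtinian A P] [IsNoetherian A P] [Module.Projective A P]
    {f : P →ₗ[A] M} (hf : Surjective f) {L : Submodule A P} (hL : L ⊔ LinearMap.ker f = ⊤) :
    ∃ S T : Submodule A P, IsCompl S T ∧ S ≤ L ∧ S.map f = ⊤ := by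
  have hf_range : LinearMap.range f = ⊤ := LinearMap.range_eq_top.mpr hf
  have hfL : Surjective (f ∘ₗ L.subtype) := by
    rw [← LinearMap.range_eq_top, LinearMap.range_comp, Submodule.range_subtype,
      LinearMap.map_eq_top_iff hf_range, hL]
  obtain ⟨h, hh⟩ := Module.projective_lifting_property (f ∘ₗ L.subtype) f hfL
  let g : Module.End A P := L.subtype ∘ₗ h
  have hfg : ∀ n, f ∘ₗ (g ^ n) = f := by
    intro n
    induction n with
    | zero => rfl
    | succ n ih => rw [pow_succ, Module.End.mul_eq_comp, ← LinearMap.comp_assoc, ih]; exact hh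
  obtain ⟨k, hk⟩ := Filter.eventually_atTop.mp (LinearMap.eventually_isCompl_ker_pow_range_pow g)
  refine ⟨_, _, (hk (k + 1) k.le_succ).symm, ?_, ?_⟩
  · rw [pow_succ', Module.End.mul_eq_comp]
    exact (LinearMap.range_comp_le_range _ _).trans
      ((LinearMap.range_comp_le_range _ _).trans L.range_subtype.le)
  · rw [← LinearMap.range_comp, hfg, hf_range]

end Modules

section RightModules

variable {R}

theorem FGMod.proj_iff_of_equiv_prod {M A B : FGMod R} (e : M ≃ₗ[Rᵐᵒᵖ] A × B) :
    M.Proj ↔ A.Proj ∧ B.Proj := by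
  refine Iff.trans ⟨fun (h : Module.Projective Rᵐᵒᵖ M) => ?_, fun h => ?_⟩ projective_prod_iff
  · exact Module.Projective.of_equiv e
  · have : Module.Projective Rᵐᵒᵖ (A × B) := h
    exact Module.Projective.of_equiv e.symm

/-- The composition length of `M` as a natural number, with junk value `0` if it is infinite, which
does not happen over a right artinian ring. -/
noncomputable def FGMod.length (M : FGMod R) : ℕ := (Module.length Rᵐᵒᵖ M).toNat

theorem FGMod.length_eq_of_equiv {M N : FGMod R} (e : M ≃ₗ[Rᵐᵒᵖ] N) : M.length = N.length :=
  congrArg ENat.toNat e.length_eq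

theorem FGMod.Indec.eq_top_of_isCompl {M : FGMod R} (hM : M.Indec) {A B : Submodule Rᵐᵒᵖ M}
    (hAB : IsCompl A B) (hA : A ≠ ⊥) : A = ⊤ := by
  have hB : B = ⊥ := (hM.2 A B hAB).resolve_left hA
  exact eq_top_of_isCompl_bot (hB ▸ hAB)

theorem isProjCover_id {M : FGMod R} (hM : M.Proj) : IsProjCover M M LinearMap.id := by
  refine ⟨hM, surjective_id, ?_⟩
  rw [LinearMap.ker_id]
  exact IsSuperfluous.bot

namespace IsProjCover

variable {M N P Q : FGMod R} {f : P →ₗ[Rᵐᵒᵖ] M}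

theorem equiv_comp (hf : IsProjCover M P f) (e : M ≃ₗ[Rᵐᵒᵖ] N) :
    IsProjCover N P (e.toLinearMap ∘ₗ f) := by
  refine ⟨hf.1, e.surjective.comp hf.2.1, ?_⟩
  rw [LinearEquiv.ker_comp]
  exact hf.2.2

theorem prodMap {g : Q →ₗ[Rᵐᵒᵖ] N} (hf : IsProjCover M P f) (hg : IsProjCover N Q g) :
    IsProjCover (M.prod N) (P.prod Q) (f.prodMap g) :=
  ⟨projective_prod_iff.mpr ⟨hf.1, hg.1⟩, hf.2.1.prodMap hg.2.1,
    IsSuperfluous.ker_prodMap hf.2.2 hg.2.2⟩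

theorem exists_surjective (hf : IsProjCover M P f) (hQ : Q.Proj) {g : Q →ₗ[Rᵐᵒᵖ] M}
    (hg : Surjective g) : ∃ h : Q →ₗ[Rᵐᵒᵖ] P, Surjective h := by
  have : Module.Projective Rᵐᵒᵖ Q := hQ
  obtain ⟨h, rfl⟩ := Module.projective_lifting_property f g hf.2.1
  exact ⟨h, IsSuperfluous.surjective_of_comp hf.2.2 hg⟩

end IsProjCover

theorem HasPdLE.succ {n : ℕ} : ∀ {M : FGMod R}, HasPdLE n M → HasPdLE (n + 1) M := by
  induction n with
  | zero => exact Or.inl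
  | succ n ih => exact Or.imp_right fun ⟨N, hN, hpd⟩ => ⟨N, hN, ih hpd⟩

theorem HasPdLE.mono {m n : ℕ} (hmn : m ≤ n) {M : FGMod R} (h : HasPdLE m M) : HasPdLE n M :=
  Nat.le_induction h (fun _ _ => HasPdLE.succ) n hmn

theorem pdIT_le_of_hasPdLE {n : ℕ} {M : FGMod R} (h : HasPdLE n M) : pdIT M ≤ n := Nat.sInf_le h

theorem ITcls_eq_zero_of_proj {P : FGMod R} (hP : P.Proj) : ITcls R P = 0 :=
  (QuotientAddGroup.eq_zero_iff _).mpr (AddSubgroup.subset_closure (Or.inr ⟨P, hP, rfl⟩))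

theorem ITcls_eq_add_of_equiv_prod {M A B : FGMod R} (e : M ≃ₗ[Rᵐᵒᵖ] A × B) :
    ITcls R M = ITcls R A + ITcls R B := by
  have hrel : ITcls R M - ITcls R A - ITcls R B = 0 :=
    (QuotientAddGroup.eq_zero_iff _).mpr (AddSubgroup.subset_closure (Or.inl ⟨M, A, B, ⟨e⟩, rfl⟩))
  rwa [sub_sub, sub_eq_zero] at hrel

theorem ITcls_eq_of_equiv {M N : FGMod R} (e : M ≃ₗ[Rᵐᵒᵖ] N) : ITcls R M = ITcls R N := by
  let Z : FGMod R := ⟨PUnit.{u + 1}⟩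
  have hZ : Z.Proj := inferInstanceAs (Module.Projective Rᵐᵒᵖ PUnit.{u + 1})
  rw [ITcls_eq_add_of_equiv_prod (B := Z) (e.trans LinearEquiv.prodUnique.symm),
    ITcls_eq_zero_of_proj hZ, add_zero]

theorem FGMod.Indec.ITgen_eq_zmultiples {N : FGMod R} (hN : N.Indec) :
    ITgen R N = AddSubgroup.zmultiples (ITcls R N) := by
  refine le_antisymm ((AddSubgroup.closure_le _).mpr ?_) (AddSubgroup.zmultiples_le.mpr ?_)
  · rintro _ ⟨N', ⟨A, B, hAB, ⟨e⟩⟩, hN', -, rfl⟩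
    have := hN'.1
    have hA : A ≠ ⊥ := Submodule.nontrivial_iff_ne_bot.mp e.symm.toEquiv.nontrivial
    rw [ITcls_eq_of_equiv (e.trans (LinearEquiv.ofTop A (hN.eq_top_of_isCompl hAB hA)))]
    exact AddSubgroup.mem_zmultiples _
  · by_cases hproj : N.Proj
    · rw [ITcls_eq_zero_of_proj hproj]
      exact zero_mem _
    · exact AddSubgroup.subset_closure
        ⟨N, ⟨⊤, ⊥, isCompl_top_bot, ⟨Submodule.topEquiv.symm⟩⟩, hN, hproj, rfl⟩

theorem FGMod.Indec.map_ITgen {N : FGMod R} (hN : N.Indec) (f : AddMonoid.End (ITK R)) :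
    (ITgen R N).map (f : ITK R →+ ITK R) = AddSubgroup.zmultiples (f (ITcls R N)) := by
  rw [hN.ITgen_eq_zmultiples]
  exact AddMonoidHom.map_zmultiples f _

variable {OmK : AddMonoid.End (ITK R)}

theorem IsSyzygyEnd.pow_succ_ITcls (hOm : IsSyzygyEnd R OmK) {M N : FGMod R} (hN : IsSyzygy M N)
    (n : ℕ) : (OmK ^ (n + 1)) (ITcls R M) = (OmK ^ n) (ITcls R N) := by
  rw [pow_succ, AddMonoid.End.coe_mul, comp_apply, hOm M N hN]

end RightModules

section RightArtinian

variable {R} [IsArtinianRing Rᵐᵒᵖ]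

namespace FGMod

/-- A submodule of a finitely generated module, as a finitely generated module. -/
abbrev ofSubmodule {M : FGMod R} (N : Submodule Rᵐᵒᵖ M) : FGMod R := ⟨N⟩

theorem coe_length (M : FGMod R) : (M.length : ℕ∞) = Module.length Rᵐᵒᵖ M :=
  ENat.natCast_toNat Module.length_ne_top

theorem length_prod (M N : FGMod R) : (M.prod N).length = M.length + N.length := by
  have h : ((M.prod N).length : ℕ∞) = M.length + N.length := by
    simp only [coe_length]
    exact Module.length_prod ..
  exact_mod_cast h

theorem length_le_of_surjective {M N : FGMod R} {f : M →ₗ[Rᵐᵒᵖ] N} (hf : Surjective f) :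
    N.length ≤ M.length := by
  have h := Module.length_le_of_surjective f hf
  rw [← coe_length, ← coe_length] at h
  exact_mod_cast h

theorem length_ofSubmodule_lt {M : FGMod R} {N : Submodule Rᵐᵒᵖ M} (hN : N ≠ ⊤) :
    (ofSubmodule N).length < M.length := by
  have h := Submodule.length_lt hN
  rw [← coe_length (ofSubmodule N), ← coe_length] at h
  exact_mod_cast h

theorem injective_of_surjective_of_length_eq {M N : FGMod R} {f : M →ₗ[Rᵐᵒᵖ] N}
    (hf : Surjective f) (hlen : M.length = N.length) : Injective f := by
  have hker : Module.length Rᵐᵒᵖ M =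
      Module.length Rᵐᵒᵖ (LinearMap.ker f) + Module.length Rᵐᵒᵖ N :=
    Module.length_eq_add_of_exact (LinearMap.ker f).subtype f (Submodule.injective_subtype _) hf
      (LinearMap.exact_subtype_ker_map f)
  rw [← coe_length, ← coe_length, hlen, ← coe_length (ofSubmodule (LinearMap.ker f))] at hker
  have hzero : (ofSubmodule (LinearMap.ker f)).length = 0 := by
    have : N.length = (ofSubmodule (LinearMap.ker f)).length + N.length := by exact_mod_cast hker
    omega
  rw [← LinearMap.ker_eq_bot, ← Submodule.subsingleton_iff_eq_bot,
    ← Module.length_eq_zero_iff (R := Rᵐᵒᵖ), ← coe_length (ofSubmodule (LinearMap.ker f)), hzero,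
    Nat.cast_zero]

theorem induction_of_indec {p : FGMod R → Prop} (subsingleton : ∀ M : FGMod R, Subsingleton M → p M)
    (indec : ∀ M : FGMod R, M.Indec → p M)
    (prod : ∀ M A B : FGMod R, (M ≃ₗ[Rᵐᵒᵖ] A × B) → p A → p B → p M) (M : FGMod R) : p M := by
  induction hl : M.length using Nat.strong_induction_on generalizing M with
  | _ l ih =>
    subst hl
    rcases subsingleton_or_nontrivial M with hM | hM
    · exact subsingleton M hM
    by_cases hindec : M.Indec
    · exact indec M hindec
    obtain ⟨A, B, hAB, hA, hB⟩ : ∃ A B : Submodule Rᵐᵒᵖ M, IsCompl A B ∧ A ≠ ⊥ ∧ B ≠ ⊥ := by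
      simpa only [Indec, hM, true_and, not_forall, not_or, exists_prop] using hindec
    have hA_top : A ≠ ⊤ := fun h => hB (eq_bot_of_top_isCompl (h ▸ hAB))
    have hB_top : B ≠ ⊤ := fun h => hA (eq_bot_of_isCompl_top (h ▸ hAB))
    exact prod M (ofSubmodule A) (ofSubmodule B) (Submodule.prodEquivOfIsCompl A B hAB).symm
      (ih _ (length_ofSubmodule_lt hA_top) _ rfl) (ih _ (length_ofSubmodule_lt hB_top) _ rfl)

end FGMod

theorem exists_isProjCover_of_surjective {M P : FGMod R} (hP : P.Proj) (f : P →ₗ[Rᵐᵒᵖ] M)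
    (hf : Surjective f) : ∃ (Q : FGMod R) (g : Q →ₗ[Rᵐᵒᵖ] M), IsProjCover M Q g := by
  induction hl : P.length using Nat.strong_induction_on generalizing P with
  | _ l ih =>
    subst hl
    by_cases hker : IsSuperfluous (LinearMap.ker f)
    · exact ⟨P, f, hP, hf, hker⟩
    obtain ⟨L, hL, hL_top⟩ : ∃ L, L ⊔ LinearMap.ker f = ⊤ ∧ L ≠ ⊤ := by
      simpa only [IsSuperfluous, not_forall, exists_prop] using hker
    have : Module.Projective Rᵐᵒᵖ P := hP
    obtain ⟨S, T, hST, hSL, hS⟩ := exists_isCompl_le_map_eq_top hf hL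
    have hS_proj : (FGMod.ofSubmodule S).Proj :=
      ((FGMod.proj_iff_of_equiv_prod (A := FGMod.ofSubmodule S) (B := FGMod.ofSubmodule T)
        (Submodule.prodEquivOfIsCompl S T hST).symm).mp hP).1
    have hS_surj : Surjective (f ∘ₗ S.subtype) := by
      rw [← LinearMap.range_eq_top, LinearMap.range_comp, Submodule.range_subtype, hS]
    exact ih _ (FGMod.length_ofSubmodule_lt (ne_top_of_le_ne_top hL_top hSL)) hS_proj _ hS_surj rfl

theorem exists_isProjCover (M : FGMod R) :
    ∃ (P : FGMod R) (f : P →ₗ[Rᵐᵒᵖ] M), IsProjCover M P f := by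
  obtain ⟨n, f, hf⟩ := Module.Finite.exists_fin' Rᵐᵒᵖ M
  exact exists_isProjCover_of_surjective (P := ⟨Fin n → Rᵐᵒᵖ⟩)
    (inferInstanceAs (Module.Projective Rᵐᵒᵖ (Fin n → Rᵐᵒᵖ))) f hf

theorem exists_isSyzygy (M : FGMod R) : ∃ N, IsSyzygy M N := by
  obtain ⟨P, f, hf⟩ := exists_isProjCover M
  exact ⟨FGMod.ofSubmodule (LinearMap.ker f), P, f, hf, ⟨LinearEquiv.refl _ _⟩⟩

/-- The length of the projective cover of `M`; it does not depend on the cover chosen here, see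
`IsProjCover.length_eq_coverLength`. -/
noncomputable def FGMod.coverLength (M : FGMod R) : ℕ := (exists_isProjCover M).choose.length

theorem IsProjCover.length_le {M P Q : FGMod R} {f : P →ₗ[Rᵐᵒᵖ] M} {g : Q →ₗ[Rᵐᵒᵖ] M}
    (hf : IsProjCover M P f) (hg : IsProjCover M Q g) : P.length ≤ Q.length := by
  obtain ⟨h, hh⟩ := hf.exists_surjective hg.1 hg.2.1
  exact FGMod.length_le_of_surjective hh

theorem IsProjCover.length_eq_coverLength {M P : FGMod R} {f : P →ₗ[Rᵐᵒᵖ] M}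
    (hf : IsProjCover M P f) : P.length = M.coverLength := by
  obtain ⟨g, hg⟩ := (exists_isProjCover M).choose_spec
  exact le_antisymm (hf.length_le hg) (hg.length_le hf)

namespace FGMod

theorem coverLength_eq_of_equiv {M N : FGMod R} (e : M ≃ₗ[Rᵐᵒᵖ] N) :
    M.coverLength = N.coverLength := by
  obtain ⟨P, f, hf⟩ := exists_isProjCover M
  rw [← hf.length_eq_coverLength, (hf.equiv_comp e).length_eq_coverLength]

theorem coverLength_prod (M N : FGMod R) :
    (M.prod N).coverLength = M.coverLength + N.coverLength := by
  obtain ⟨P, f, hf⟩ := exists_isProjCover M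
  obtain ⟨Q, g, hg⟩ := exists_isProjCover N
  rw [← hf.length_eq_coverLength, ← hg.length_eq_coverLength, ← length_prod,
    (hf.prodMap hg).length_eq_coverLength]

theorem coverLength_eq_length_iff {M : FGMod R} : M.coverLength = M.length ↔ M.Proj := by
  constructor
  · intro h
    obtain ⟨P, f, hf⟩ := exists_isProjCover M
    have hinj : Injective f :=
      injective_of_surjective_of_length_eq hf.2.1 (hf.length_eq_coverLength.trans h)
    have : Module.Projective Rᵐᵒᵖ P := hf.1
    exact Module.Projective.of_equiv (LinearEquiv.ofBijective f ⟨hinj, hf.2.1⟩)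
  · intro h
    exact (isProjCover_id h).length_eq_coverLength.symm

end FGMod

variable (R) in
/-- The homomorphism `K → ℤ` with `[M] ↦ length (Ω M)`, computed as the length of the projective
cover of `M` minus the length of `M`. -/
noncomputable def syzygyLength : ITK R →+ ℤ :=
  QuotientAddGroup.lift (AddSubgroup.closure (ITRel R))
    (FreeAbelianGroup.lift fun M : FGMod R => (M.coverLength : ℤ) - M.length) (by
      rw [AddSubgroup.closure_le]
      rintro _ (⟨A, B, C, ⟨e⟩, rfl⟩ | ⟨P, hP, rfl⟩)
      · have hcover : A.coverLength = B.coverLength + C.coverLength :=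
          (FGMod.coverLength_eq_of_equiv (N := B.prod C) e).trans (FGMod.coverLength_prod B C)
        have hlength : A.length = B.length + C.length :=
          (FGMod.length_eq_of_equiv (N := B.prod C) e).trans (FGMod.length_prod B C)
        simp only [SetLike.mem_coe, AddMonoidHom.mem_ker, map_sub, FreeAbelianGroup.lift_apply_of,
          hcover, hlength]
        push_cast
        ring
      · simp only [SetLike.mem_coe, AddMonoidHom.mem_ker, FreeAbelianGroup.lift_apply_of,
          FGMod.coverLength_eq_length_iff.mpr hP, sub_self])

theorem syzygyLength_ITcls (M : FGMod R) :
    syzygyLength R (ITcls R M) = (M.coverLength : ℤ) - M.length :=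
  FreeAbelianGroup.lift_apply_of _ _

theorem isOfFinAddOrder_ITcls_iff {M : FGMod R} : IsOfFinAddOrder (ITcls R M) ↔ M.Proj := by
  constructor
  · intro h
    have hzero : syzygyLength R (ITcls R M) = 0 := ((syzygyLength R).isOfFinAddOrder h).eq_zero'
    rw [syzygyLength_ITcls, sub_eq_zero, Nat.cast_inj] at hzero
    exact FGMod.coverLength_eq_length_iff.mp hzero
  · intro h
    exact ITcls_eq_zero_of_proj h ▸ IsOfFinAddOrder.zero

theorem ITcls_eq_zero_iff {M : FGMod R} : ITcls R M = 0 ↔ M.Proj :=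
  ⟨fun h => isOfFinAddOrder_ITcls_iff.mp (h ▸ IsOfFinAddOrder.zero), ITcls_eq_zero_of_proj⟩

namespace IsSyzygyEnd

variable {OmK : AddMonoid.End (ITK R)}

theorem exists_pow_ITcls_eq (hOm : IsSyzygyEnd R OmK) (n : ℕ) (M : FGMod R) :
    ∃ N, (OmK ^ n) (ITcls R M) = ITcls R N := by
  induction n generalizing M with
  | zero => exact ⟨M, rfl⟩
  | succ n ih =>
    obtain ⟨N, hN⟩ := exists_isSyzygy M
    rw [hOm.pow_succ_ITcls hN]
    exact ih N

theorem hasPdLE_iff (hOm : IsSyzygyEnd R OmK) {n : ℕ} {M : FGMod R} :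
    HasPdLE n M ↔ (OmK ^ n) (ITcls R M) = 0 := by
  induction n generalizing M with
  | zero => exact ITcls_eq_zero_iff.symm
  | succ n ih =>
    constructor
    · rintro (hM | ⟨N, hN, hpd⟩)
      · rw [ITcls_eq_zero_of_proj hM, map_zero]
      · rwa [hOm.pow_succ_ITcls hN, ← ih]
    · intro h
      obtain ⟨N, hN⟩ := exists_isSyzygy M
      rw [hOm.pow_succ_ITcls hN, ← ih] at h
      exact Or.inr ⟨N, hN, h⟩

theorem hasPdLE_iff_isOfFinAddOrder (hOm : IsSyzygyEnd R OmK) {n : ℕ} {M : FGMod R} :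
    HasPdLE n M ↔ IsOfFinAddOrder ((OmK ^ n) (ITcls R M)) := by
  obtain ⟨N, hN⟩ := hOm.exists_pow_ITcls_eq n M
  rw [hOm.hasPdLE_iff, hN, ITcls_eq_zero_iff, isOfFinAddOrder_ITcls_iff]

theorem hasPdLE_iff_of_equiv_prod (hOm : IsSyzygyEnd R OmK) {n : ℕ} {M A B : FGMod R}
    (e : M ≃ₗ[Rᵐᵒᵖ] A × B) : HasPdLE n M ↔ HasPdLE n A ∧ HasPdLE n B := by
  obtain ⟨A', hA'⟩ := hOm.exists_pow_ITcls_eq n A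
  obtain ⟨B', hB'⟩ := hOm.exists_pow_ITcls_eq n B
  have hsum : (OmK ^ n) (ITcls R M) = ITcls R (A'.prod B') := by
    rw [ITcls_eq_add_of_equiv_prod e, map_add, hA', hB']
    exact (ITcls_eq_add_of_equiv_prod (LinearEquiv.refl _ _)).symm
  simp only [hOm.hasPdLE_iff, hsum, hA', hB', ITcls_eq_zero_iff]
  exact FGMod.proj_iff_of_equiv_prod (LinearEquiv.refl _ _)

theorem rkIT_map_ITgen_eq_zero_iff (hOm : IsSyzygyEnd R OmK) {N : FGMod R} (hN : N.Indec) (n : ℕ) :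
    rkIT R ((ITgen R N).map ((OmK ^ n : AddMonoid.End (ITK R)) : ITK R →+ ITK R)) = 0 ↔
      HasPdLE n N := by
  rw [hOm.hasPdLE_iff_isOfFinAddOrder, ← finrank_int_zmultiples_eq_zero_iff, ← hN.map_ITgen, rkIT]

theorem hasPdLE_phiIT (hOm : IsSyzygyEnd R OmK) {N : FGMod R} (hN : N.Indec) (hpd : FinPd N) :
    HasPdLE (phiIT R OmK N) N := by
  obtain ⟨n, hn⟩ := hpd
  have hrank : ∀ᶠ i in Filter.atTop,
      rkIT R ((ITgen R N).map ((OmK ^ i : AddMonoid.End (ITK R)) : ITK R →+ ITK R)) = 0 :=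
    (Filter.eventually_ge_atTop n).mono fun i hi =>
      (hOm.rkIT_map_ITgen_eq_zero_iff hN i).mpr (hn.mono hi)
  exact (hOm.rkIT_map_ITgen_eq_zero_iff hN _).mp (apply_sInf_stable_of_eventually_eq hrank)

end IsSyzygyEnd

end RightArtinian

theorem findim_le_phidim_general (R : Type u) [Ring R] [IsArtinianRing Rᵐᵒᵖ]
    (OmK : AddMonoid.End (ITK R)) (hOm : IsSyzygyEnd R OmK)
    (d : ℕ) (hphi : ∀ N : FGMod R, N.Indec → FinPd N → phiIT R OmK N ≤ d) :
    ∀ M : FGMod R, FinPd M → pdIT M ≤ d := by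
  suffices h : ∀ M : FGMod R, FinPd M → HasPdLE d M from
    fun M hM => pdIT_le_of_hasPdLE (h M hM)
  intro M
  induction M using FGMod.induction_of_indec with
  | subsingleton M hM =>
    have hproj : M.Proj := inferInstanceAs (Module.Projective Rᵐᵒᵖ M)
    exact fun _ => HasPdLE.mono d.zero_le hproj
  | indec N hN => exact fun hpd => (hOm.hasPdLE_phiIT hN hpd).mono (hphi N hN hpd)
  | prod M A B e hA hB =>
    rintro ⟨n, hn⟩
    have hAB : HasPdLE n A ∧ HasPdLE n B := (hOm.hasPdLE_iff_of_equiv_prod e).mp hn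
    exact (hOm.hasPdLE_iff_of_equiv_prod e).mpr ⟨hA ⟨n, hAB.1⟩, hB ⟨n, hAB.2⟩⟩

/-- If the `φ`-dimension of `R` is finite (bounded by `d`), then the
finitistic dimension of `R` is finite; indeed `fin.dim R ≤ φ-dim R`. -/
theorem findim_le_phidim (R : Type u) [Ring R] [IsArtinianRing Rᵐᵒᵖ]
    (OmK : AddMonoid.End (ITK R)) (hOm : IsSyzygyEnd R OmK)
    (d : ℕ) (hphi : ∀ M : FGMod R, phiIT R OmK M ≤ d) :
    ∀ M : FGMod R, FinPd M → pdIT M ≤ d :=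
  findim_le_phidim_general R OmK hOm d fun N _ _ => hphi N
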